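/- Let (T_i)_{i=1}^∞ be a sequence of bounded linear operators from a separable Banach space X to a normed linear space Y. The following are equivalent: (1) (T_i) is densely mean Li-Yorke δ-chaotic for some δ>0; (2) (T_i) is densely mean Li-Yorke extremely chaotic; (3) the set of mean Li-Yorke extreme pairs is dense in X×X; (4) the set of mean Li-Yorke extreme pairs is residual in X×X; (5) the set of absolutely mean irregular vectors is dense in X; (6) the set of absolutely mean irregular vectors is residual in X; (7) the mean proximal relation MProx(T_i) is dense in X×X and (T_i) is mean sensitive. -/

import Mathlib

open Filter Topology

variable {X Y : Type*} [NormedAddCommGroup X] [NormedSpace ℝ X]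
  [NormedAddCommGroup Y] [NormedSpace ℝ Y]

/-- The Cesàro average `(1/n) ∑_{i=1}^{n} ‖T i x - T i y‖`. -/
noncomputable def mavg (T : ℕ → X →L[ℝ] Y) (x y : X) (n : ℕ) : ℝ :=
  (∑ i ∈ Finset.Icc 1 n, ‖T i x - T i y‖) / n

/-- The Cesàro average `(1/n) ∑_{i=1}^{n} ‖T i x‖`. -/
noncomputable def avg (T : ℕ → X →L[ℝ] Y) (x : X) (n : ℕ) : ℝ :=
  (∑ i ∈ Finset.Icc 1 n, ‖T i x‖) / n

/-- `limsup_n (1/n) ∑_{i=1}^{n} ‖T i x - T i y‖`, computed in `EReal`. -/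
noncomputable def msup (T : ℕ → X →L[ℝ] Y) (x y : X) : EReal :=
  Filter.limsup (fun n => (mavg T x y n : EReal)) Filter.atTop

/-- `liminf_n (1/n) ∑_{i=1}^{n} ‖T i x - T i y‖`, computed in `EReal`. -/
noncomputable def minf (T : ℕ → X →L[ℝ] Y) (x y : X) : EReal :=
  Filter.liminf (fun n => (mavg T x y n : EReal)) Filter.atTop

/-- `limsup_n (1/n) ∑_{i=1}^{n} ‖T i x‖`, computed in `EReal`. -/
noncomputable def asup (T : ℕ → X →L[ℝ] Y) (x : X) : EReal :=
  Filter.limsup (fun n => (avg T x n : EReal)) Filter.atTop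

/-- `liminf_n (1/n) ∑_{i=1}^{n} ‖T i x‖`, computed in `EReal`. -/
noncomputable def ainf (T : ℕ → X →L[ℝ] Y) (x : X) : EReal :=
  Filter.liminf (fun n => (avg T x n : EReal)) Filter.atTop

/-- Mean sensitivity of the sequence `(T i)`. -/
def MeanSensitive (T : ℕ → X →L[ℝ] Y) : Prop :=
  ∃ δ : ℝ, 0 < δ ∧ ∀ x : X, ∀ ε : ℝ, 0 < ε →
    ∃ y : X, ‖x - y‖ < ε ∧ (δ : EReal) < msup T x y

/-!
Every condition depends only on differences `x - y`, so the pairs are governed by the set `I` of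
absolutely mean irregular vectors, and `I` is a Gδ because the averages are continuous.
The averages are seminorms, so the vectors with bounded averages form a subspace. By uniform
boundedness mean sensitivity makes this subspace proper, and the complement of a proper subspace is
dense; Baire's theorem combines this with the dense Gδ set where the lower average vanishes.
Conversely, if `I` is residual, a transfinite recursion of length `ω₁` that avoids countably many
meagre sets at each step produces a dense uncountable set all of whose differences lie in `I`.
-/

section Topology

variable {α β ι G : Type*} [TopologicalSpace α]

theorem isGδ_setOf_frequently_mem {l : Filter ι} [l.IsCountablyGenerated] {s : ι → Set α}
    (hs : ∀ i, IsOpen (s i)) : IsGδ {x | ∃ᶠ i in l, x ∈ s i} := by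
  obtain ⟨V, hV⟩ := l.exists_antitone_basis
  have h_eq : {x | ∃ᶠ i in l, x ∈ s i} = ⋂ k, ⋃ i ∈ V k, s i := by
    ext x
    simp [hV.1.frequently_iff]
  rw [h_eq]
  exact IsGδ.iInter_of_isOpen fun k => isOpen_biUnion fun i _ => hs i

section Semicontinuous

variable [CompleteLinearOrder β] [DenselyOrdered β] [TopologicalSpace β] [OrderTopology β]
  [TopologicalSpace.SeparableSpace β] {l : Filter ι} [l.IsCountablyGenerated] {f : ι → α → β}

theorem isGδ_setOf_le_limsup (hf : ∀ i, LowerSemicontinuous (f i)) (a : β) :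
    IsGδ {x | a ≤ limsup (f · x) l} := by
  obtain ⟨D, hD_countable, hD_dense⟩ := TopologicalSpace.exists_countable_dense β
  have h_eq : {x | a ≤ limsup (f · x) l} =
      ⋂ d ∈ D ∩ Set.Iio a, {x | ∃ᶠ i in l, x ∈ f i ⁻¹' Set.Ioi d} := by
    ext x
    rw [Set.mem_ofPred_eq, le_limsup_iff, Set.mem_iInter₂]
    refine ⟨fun h d hd => h d hd.2, fun h b hb => ?_⟩
    obtain ⟨d, hdD, hbd, hda⟩ := hD_dense.exists_between hb
    exact (h d ⟨hdD, hda⟩).mono fun i hi => hbd.trans hi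
  rw [h_eq]
  exact IsGδ.biInter (hD_countable.mono Set.inter_subset_left) fun d _ =>
    isGδ_setOf_frequently_mem fun i => (hf i).isOpen_preimage d

theorem isGδ_setOf_liminf_le (hf : ∀ i, UpperSemicontinuous (f i)) (a : β) :
    IsGδ {x | liminf (f · x) l ≤ a} :=
  isGδ_setOf_le_limsup (β := βᵒᵈ) (f := f) hf a

end Semicontinuous

theorem mem_residual_iff_dense_of_isGδ [BaireSpace α] {s : Set α} (hs : IsGδ s) :
    s ∈ residual α ↔ Dense s :=
  ⟨dense_of_mem_residual, residual_of_dense_Gδ hs⟩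

theorem exists_ne_dist_lt_of_dense {M : Type*} [MetricSpace M] [PerfectSpace M] [Nonempty M]
    {s : Set M} (hs : Dense s) {ε : ℝ} (hε : 0 < ε) : ∃ a ∈ s, ∃ b ∈ s, a ≠ b ∧ dist a b < ε := by
  obtain ⟨a, ha⟩ := hs.nonempty
  obtain ⟨b, ⟨hb, hba⟩, hab⟩ := (hs.sdiff_singleton a).exists_dist_lt a hε
  exact ⟨a, ha, b, hb, Ne.symm hba, hab⟩

section Sub

variable [TopologicalSpace G] [AddGroup G] [IsTopologicalAddGroup G]

theorem isOpenMap_fst_sub_snd : IsOpenMap fun p : G × G => p.1 - p.2 :=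
  IsOpenMap.of_sections fun p =>
    ⟨fun z => (z + p.2, p.2), by fun_prop, by simp, fun z => by simp⟩

theorem dense_setOf_fst_sub_snd_mem_iff {s : Set G} :
    Dense {p : G × G | p.1 - p.2 ∈ s} ↔ Dense s := by
  have h_surj : Function.Surjective fun p : G × G => p.1 - p.2 := fun x => ⟨(x, 0), sub_zero x⟩
  refine ⟨fun h => ?_, fun h => h.preimage isOpenMap_fst_sub_snd⟩
  rw [← Set.image_preimage_eq s h_surj]
  exact h_surj.denseRange.dense_image (by fun_prop) h

end Sub

end Topology

section Mycielski

variable {α ι : Type*} {R : α → α → Prop}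

theorem exists_forall_mem_forall_lt_of_countable_Iio [Preorder ι] [WellFoundedLT ι]
    (hι : ∀ i : ι, (Set.Iio i).Countable) {U : ι → Set α}
    (hR : ∀ i, ∀ C : Set α, C.Countable → ∃ x ∈ U i, ∀ c ∈ C, R x c) :
    ∃ f : ι → α, (∀ i, f i ∈ U i) ∧ ∀ i, ∀ j < i, R (f i) (f j) := by
  have h_next (i : ι) (g : Set.Iio i → α) : ∃ x ∈ U i, ∀ j, R x (g j) := by
    have := (hι i).to_subtype
    simpa only [Set.forall_mem_range] using hR i (Set.range g) (Set.countable_range g)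
  choose next h_mem h_rel using h_next
  let f : ι → α := wellFounded_lt.fix fun i ih => next i fun j => ih j j.2
  have hf (i : ι) : f i = next i fun j => f j := wellFounded_lt.fix_eq _ i
  refine ⟨f, fun i => hf i ▸ h_mem i _, fun i j hj => ?_⟩
  rw [hf i]
  exact h_rel i _ ⟨j, hj⟩

theorem exists_mem_forall_mem_of_eventually_residual [TopologicalSpace α] [BaireSpace α]
    (hR : ∀ c, ∀ᶠ x in residual α, R x c) {U : Set α} (hU : IsOpen U) (hU_ne : U.Nonempty)
    {C : Set α} (hC : C.Countable) : ∃ x ∈ U, ∀ c ∈ C, R x c :=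
  (dense_of_mem_residual ((eventually_countable_ball hC).2 fun c _ => hR c)).inter_open_nonempty
    U hU hU_ne

open Cardinal in
theorem exists_uncountable_wellFoundedLT_countable_Iio :
    ∃ (ι : Type) (_ : LinearOrder ι) (_ : WellFoundedLT ι),
      Uncountable ι ∧ ∀ i : ι, (Set.Iio i).Countable := by
  refine ⟨(ℵ₁ : Cardinal.{0}).ord.ToType, inferInstance, inferInstance, ?_, fun i => ?_⟩
  · rw [← aleph0_lt_mk_iff, mk_ord_toType]
    exact aleph0_lt_aleph_one
  · have h_lt : #(Set.Iio i) < ℵ₁ := by simpa using mk_Iio_lt i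
    rwa [← le_aleph0_iff_set_countable, ← Order.lt_succ_iff, succ_aleph0]

theorem exists_dense_not_countable_pairwise [TopologicalSpace α] [BaireSpace α]
    [SecondCountableTopology α] [Nonempty α] (h_symm : ∀ x y, R x y → R y x)
    (h_irrefl : ∀ x, ¬ R x x) (hR : ∀ c, ∀ᶠ x in residual α, R x c) :
    ∃ K : Set α, Dense K ∧ ¬ K.Countable ∧ K.Pairwise R := by
  obtain ⟨ι, _, _, _, h_Iio⟩ := exists_uncountable_wellFoundedLT_countable_Iio
  have h_basis := TopologicalSpace.isBasis_countableBasis α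
  obtain ⟨V, hV⟩ := (TopologicalSpace.countable_countableBasis α).exists_eq_range
    (.of_sUnion_eq_univ h_basis.sUnion_eq)
  have hV_mem (n : ℕ) : V n ∈ TopologicalSpace.countableBasis α := hV ▸ Set.mem_range_self n
  obtain ⟨e, he⟩ : ∃ e : ι → ℕ, e.Surjective :=
    ⟨_, Function.invFun_surjective (Infinite.natEmbedding ι).injective⟩
  obtain ⟨f, hfV, hfR⟩ := exists_forall_mem_forall_lt_of_countable_Iio (R := R) h_Iio
    (U := fun i => V (e i)) fun i C hC => exists_mem_forall_mem_of_eventually_residual hR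
      (h_basis.isOpen (hV_mem _)) (TopologicalSpace.nonempty_of_mem_countableBasis (hV_mem _)) hC
  have h_pair : Pairwise fun i j => R (f i) (f j) := fun i j hij =>
    hij.lt_or_gt.elim (fun h => h_symm _ _ (hfR j i h)) (hfR i j)
  have h_inj : f.Injective := fun i j h_eq => by_contra fun hij =>
    h_irrefl (f i) (by simpa only [← h_eq] using h_pair hij)
  refine ⟨Set.range f, h_basis.dense_iff.2 fun W hW _ => ?_, fun h_countable => ?_,
    h_pair.range_pairwise⟩
  · obtain ⟨n, rfl⟩ := hV ▸ hW
    obtain ⟨i, rfl⟩ := he n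
    exact ⟨f i, hfV i, i, rfl⟩
  · have := h_countable.to_subtype
    exact not_countable (Set.rangeFactorization_injective.2 h_inj).countable

end Mycielski

section Seminorm

variable {ι 𝕜 E : Type*} [AddCommGroup E]

/-- The subspace of vectors on which a family of seminorms is pointwise bounded; for the average
seminorms, its complement is the set of vectors with infinite upper average. -/
def boundedSubmodule [SeminormedRing 𝕜] [Module 𝕜 E] (p : ι → Seminorm 𝕜 E) : Submodule 𝕜 E where
  carrier := {x | BddAbove (Set.range fun i => p i x)}
  zero_mem' := ⟨0, by rintro _ ⟨i, rfl⟩; simp⟩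
  add_mem' := by
    rintro x y ⟨A, hA⟩ ⟨B, hB⟩
    refine ⟨A + B, ?_⟩
    rintro _ ⟨i, rfl⟩
    exact (map_add_le_add (p i) x y).trans (add_le_add (hA ⟨i, rfl⟩) (hB ⟨i, rfl⟩))
  smul_mem' := by
    rintro c x ⟨A, hA⟩
    refine ⟨‖c‖ * A, ?_⟩
    rintro _ ⟨i, rfl⟩
    simpa only [map_smul_eq_mul] using mul_le_mul_of_nonneg_left (hA ⟨i, rfl⟩) (norm_nonneg c)

theorem eventually_forall_lt_of_boundedSubmodule_eq_top [NormedField 𝕜] [Module 𝕜 E]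
    [TopologicalSpace E] [BarrelledSpace 𝕜 E] {p : ι → Seminorm 𝕜 E}
    (hp : ∀ i, Continuous (p i)) (h_top : boundedSubmodule p = ⊤) {δ : ℝ} (hδ : 0 < δ) :
    ∀ᶠ x in 𝓝 (0 : E), ∀ i, p i x < δ := by
  have h_bdd (x : E) : BddAbove (Set.range fun i => p i x)  := Submodule.eq_top_iff'.1 h_top x
  have h_range : BddAbove (Set.range p) := Seminorm.bddAbove_range_iff.2 h_bdd
  have h_cont : Continuous (⨆ i, ⇑(p i)) := Seminorm.continuous_iSup p hp h_range
  filter_upwards [h_cont.tendsto 0 |>.eventually_lt_const (by simpa using hδ)] with x hx i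
  rw [iSup_apply] at hx
  exact (le_ciSup (h_bdd x) i).trans_lt hx

theorem dense_compl_of_ne_top [NontriviallyNormedField 𝕜] [Module 𝕜 E] [TopologicalSpace E]
    [ContinuousAdd E] [ContinuousSMul 𝕜 E] {S : Submodule 𝕜 E} (hS : S ≠ ⊤) :
    Dense (S : Set E)ᶜ := by
  rw [← interior_eq_empty_iff_dense_compl, ← Set.not_nonempty_iff_eq_empty]
  exact fun h => hS (S.eq_top_of_nonempty_interior' h)

end Seminorm

theorem limsup_coe_ereal_eq_top_iff {u : ℕ → ℝ} :
    limsup (fun n => (u n : EReal)) atTop = ⊤ ↔ ¬ BddAbove (Set.range u) := by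
  rw [← not_iff_not, not_not, ← ne_eq, ← lt_top_iff_ne_top]
  constructor
  · intro h
    obtain ⟨r, hr, -⟩ := EReal.lt_iff_exists_real_btwn.1 h
    have h_ev : ∀ᶠ n in atTop, u n ≤ r :=
      (eventually_lt_of_limsup_lt hr).mono fun n hn => (EReal.coe_lt_coe_iff.1 hn).le
    exact IsBoundedUnder.bddAbove_range ⟨r, h_ev⟩
  · rintro ⟨M, hM⟩
    have h_le : limsup (fun n => (u n : EReal)) atTop ≤ M :=
      limsup_le_of_le (h := .of_forall fun n => EReal.coe_le_coe_iff.2 (hM ⟨n, rfl⟩))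
    exact h_le.trans_lt (EReal.coe_lt_top M)

section Averages

variable (T : ℕ → X →L[ℝ] Y)

theorem mavg_eq_avg_sub (x y : X) : mavg T x y = avg T (x - y) := by
  funext n
  simp only [mavg, avg, map_sub]

theorem msup_eq_asup_sub (x y : X) : msup T x y = asup T (x - y) := by
  rw [msup, asup, mavg_eq_avg_sub]

theorem minf_eq_ainf_sub (x y : X) : minf T x y = ainf T (x - y) := by
  rw [minf, ainf, mavg_eq_avg_sub]

theorem continuous_avg (n : ℕ) : Continuous fun x => avg T x n := by
  unfold avg
  fun_prop

/-- The average `x ↦ avg T x n` as a seminorm, which makes the uniform boundedness principle for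
seminorms applicable. -/
noncomputable def avgSeminorm (n : ℕ) : Seminorm ℝ X :=
  Seminorm.of (fun x => avg T x n)
    (fun x y => by
      simp only [avg, map_add]
      rw [← add_div, ← Finset.sum_add_distrib]
      gcongr
      exact norm_add_le _ _)
    (fun c x => by
      simp only [avg, map_smul, norm_smul]
      rw [← Finset.mul_sum, mul_div_assoc])

theorem avg_zero : avg T 0 = 0 :=
  funext fun n => map_zero (avgSeminorm T n)

theorem avg_neg (x : X) : avg T (-x) = avg T x :=
  funext fun n => map_neg_eq_map (avgSeminorm T n) x

theorem ainf_zero : ainf T 0 = 0 := by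
  simp [ainf, avg_zero]

theorem ainf_nonneg (x : X) : 0 ≤ ainf T x :=
  le_liminf_of_le (h := .of_forall fun n => EReal.coe_nonneg.2 (apply_nonneg (avgSeminorm T n) x))

theorem isGδ_setOf_ainf_eq_zero : IsGδ {x | ainf T x = 0} := by
  simp only [← (ainf_nonneg T _).ge_iff_eq']
  exact isGδ_setOf_liminf_le
    (fun n => (continuous_coe_real_ereal.comp (continuous_avg T n)).upperSemicontinuous) 0

theorem isGδ_setOf_asup_eq_top : IsGδ {x | asup T x = ⊤} := by
  simp only [← top_le_iff]
  exact isGδ_setOf_le_limsup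
    (fun n => (continuous_coe_real_ereal.comp (continuous_avg T n)).lowerSemicontinuous) ⊤

theorem asup_eq_top_iff (x : X) : asup T x = ⊤ ↔ x ∉ boundedSubmodule (avgSeminorm T) :=
  limsup_coe_ereal_eq_top_iff

/-- The set of absolutely mean irregular vectors of the sequence `T`. -/
def absolutelyMeanIrregularSet : Set X :=
  {x | ainf T x = 0 ∧ asup T x = ⊤}

theorem isGδ_absolutelyMeanIrregularSet : IsGδ (absolutelyMeanIrregularSet T) :=
  (isGδ_setOf_ainf_eq_zero T).inter (isGδ_setOf_asup_eq_top T)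

theorem zero_notMem_absolutelyMeanIrregularSet : 0 ∉ absolutelyMeanIrregularSet T :=
  fun h => (asup_eq_top_iff T 0).1 h.2 (zero_mem _)

variable {T}

theorem neg_mem_absolutelyMeanIrregularSet {x : X} (hx : x ∈ absolutelyMeanIrregularSet T) :
    -x ∈ absolutelyMeanIrregularSet T := by
  simpa only [absolutelyMeanIrregularSet, ainf, asup, Set.mem_ofPred_eq, avg_neg] using hx

theorem exists_dense_not_countable_pairwise_sub_mem [CompleteSpace X]
    [TopologicalSpace.SeparableSpace X] (h : Dense (absolutelyMeanIrregularSet T)) :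
    ∃ K : Set X, Dense K ∧ ¬ K.Countable ∧
      K.Pairwise fun x y => x - y ∈ absolutelyMeanIrregularSet T := by
  have : SecondCountableTopology X := UniformSpace.secondCountable_of_separable X
  refine exists_dense_not_countable_pairwise (fun x y hxy => ?_) (fun x hx => ?_) fun c => ?_
  · exact neg_sub x y ▸ neg_mem_absolutelyMeanIrregularSet hxy
  · exact zero_notMem_absolutelyMeanIrregularSet T (sub_self x ▸ hx)
  · exact residual_of_dense_Gδ ((isGδ_absolutelyMeanIrregularSet T).preimage (by fun_prop))
      (h.preimage (isOpenMap_sub_right c))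

theorem dense_setOf_asup_eq_top_of_meanSensitive [CompleteSpace X] (h : MeanSensitive T) :
    Dense {x | asup T x = ⊤} := by
  obtain ⟨δ, hδ, h⟩ := h
  have h_ne_top : boundedSubmodule (avgSeminorm T) ≠ ⊤ := by
    intro h_top
    obtain ⟨ε, hε, h_small⟩ := Metric.eventually_nhds_iff.1
      (eventually_forall_lt_of_boundedSubmodule_eq_top (continuous_avg T) h_top hδ)
    obtain ⟨y, hy, h_large⟩ := h 0 ε hε
    have h_lt := h_small ((dist_zero_right (0 - y)).trans_lt hy)
    rw [msup_eq_asup_sub] at h_large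
    refine h_large.not_ge (limsup_le_of_le (h := .of_forall fun n => ?_))
    exact EReal.coe_le_coe_iff.2 (h_lt n).le
  simpa only [asup_eq_top_iff] using! dense_compl_of_ne_top h_ne_top

theorem dense_absolutelyMeanIrregularSet [CompleteSpace X] (h_prox : Dense {x | ainf T x = 0})
    (h_sens : MeanSensitive T) : Dense (absolutelyMeanIrregularSet T) :=
  h_prox.inter_of_Gδ (isGδ_setOf_ainf_eq_zero T) (isGδ_setOf_asup_eq_top T)
    (dense_setOf_asup_eq_top_of_meanSensitive h_sens)

theorem dense_setOf_ainf_sub_eq_zero {K : Set X} (hK : Dense K)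
    (h : ∀ x ∈ K, ∀ y ∈ K, x ≠ y → ainf T (x - y) = 0) :
    Dense {p : X × X | ainf T (p.1 - p.2) = 0} := by
  refine (hK.prod hK).mono ?_
  rintro p ⟨hx, hy⟩
  rcases eq_or_ne p.1 p.2 with h_eq | h_ne
  · simp [h_eq, ainf_zero]
  · exact h p.1 hx p.2 hy h_ne

theorem meanSensitive_of_le_asup_sub [Nontrivial X] {K : Set X} (hK : Dense K) {δ : ℝ} (hδ : 0 < δ)
    (h : ∀ x ∈ K, ∀ y ∈ K, x ≠ y → δ ≤ asup T (x - y)) : MeanSensitive T := by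
  have : PerfectSpace X := perfectSpace_of_module ℝ X
  refine ⟨δ / 2, half_pos hδ, fun x ε hε => ?_⟩
  obtain ⟨a, ha, b, hb, hab, h_dist⟩ := exists_ne_dist_lt_of_dense hK hε
  refine ⟨x - (a - b), by rwa [sub_sub_cancel, ← dist_eq_norm], ?_⟩
  rw [msup_eq_asup_sub, sub_sub_cancel]
  exact (EReal.coe_lt_coe_iff.2 (half_lt_self hδ)).trans_le (h a ha b hb hab)

end Averages

/-- **Characterizations of dense mean Li-Yorke extreme chaos** for a sequence of
bounded linear operators from a separable Banach space to a normed space. -/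
theorem denselyMeanLiYorkeChaotic_tfae [CompleteSpace X] [TopologicalSpace.SeparableSpace X]
    (T : ℕ → X →L[ℝ] Y) :
    List.TFAE [
      ∃ δ : ℝ, 0 < δ ∧ ∃ K : Set X, Dense K ∧ ¬ K.Countable ∧
        ∀ x ∈ K, ∀ y ∈ K, x ≠ y → (minf T x y = 0 ∧ (δ : EReal) ≤ msup T x y),
      ∃ K : Set X, Dense K ∧ ¬ K.Countable ∧
        ∀ x ∈ K, ∀ y ∈ K, x ≠ y → (minf T x y = 0 ∧ msup T x y = ⊤),
      Dense {p : X × X | minf T p.1 p.2 = 0 ∧ msup T p.1 p.2 = ⊤},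
      {p : X × X | minf T p.1 p.2 = 0 ∧ msup T p.1 p.2 = ⊤} ∈ residual (X × X),
      Dense {x : X | ainf T x = 0 ∧ asup T x = ⊤},
      {x : X | ainf T x = 0 ∧ asup T x = ⊤} ∈ residual X,
      Dense {p : X × X | minf T p.1 p.2 = 0} ∧ MeanSensitive T] := by
  simp only [minf_eq_ainf_sub, msup_eq_asup_sub]
  have hG := isGδ_absolutelyMeanIrregularSet T
  tfae_have 1 → 7 := by
    rintro ⟨δ, hδ, K, hK, hK_unc, h⟩
    have : Nontrivial X := Set.nontrivial_of_nontrivial <|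
      Set.not_subsingleton_iff.1 fun hs => hK_unc hs.countable
    exact ⟨dense_setOf_ainf_sub_eq_zero hK fun x hx y hy hxy => (h x hx y hy hxy).1,
      meanSensitive_of_le_asup_sub hK hδ fun x hx y hy hxy => (h x hx y hy hxy).2⟩
  tfae_have 7 → 5 := fun ⟨h_prox, h_sens⟩ =>
    dense_absolutelyMeanIrregularSet (dense_setOf_fst_sub_snd_mem_iff.1 h_prox) h_sens
  tfae_have 5 → 2 := fun h =>
    have ⟨K, hK, hK_unc, hK_pair⟩ := exists_dense_not_countable_pairwise_sub_mem h
    ⟨K, hK, hK_unc, fun _ hx _ hy hxy => hK_pair hx hy hxy⟩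
  tfae_have 2 → 1 := fun ⟨K, hK, hK_unc, h⟩ =>
    ⟨1, one_pos, K, hK, hK_unc, fun x hx y hy hxy =>
      (h x hx y hy hxy).imp_right fun h_top => le_top.trans_eq h_top.symm⟩
  tfae_have 3 ↔ 5 := dense_setOf_fst_sub_snd_mem_iff (s := absolutelyMeanIrregularSet T)
  tfae_have 4 ↔ 3 := mem_residual_iff_dense_of_isGδ <|
    hG.preimage (f := fun p : X × X => p.1 - p.2) (by fun_prop)
  tfae_have 6 ↔ 5 := mem_residual_iff_dense_of_isGδ hG
  tfae_finish
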